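/- Let Λ = ℤ_p[[T₁,…,T_d]] and let M be a finitely generated torsion Λ-module. Then Ext^1_Λ(M, Λ) has no nonzero pseudo-null Λ-submodule. -/

import Mathlib

open CategoryTheory

/-- `extModule R M N n` is the `n`-th Ext group `Ext^n_R(M, N)` in the category of
`R`-modules. -/
noncomputable def extModule (R : Type) [CommRing R] (M N : Type) [AddCommGroup M] [Module R M]
    [AddCommGroup N] [Module R N] (n : ℕ) : ModuleCat R :=
  ((Ext R (ModuleCat R) n).obj (Opposite.op (ModuleCat.of R M))).obj (ModuleCat.of R N)

/-- A module over a commutative ring is pseudo-null if its localization at every prime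
of height at most one vanishes. -/
def IsPseudoNull (R : Type) [CommRing R] (M : Type) [AddCommGroup M] [Module R M] : Prop :=
  ∀ (P : Ideal R) (hP : P.IsPrime), Order.height (⟨P, hP⟩ : PrimeSpectrum R) ≤ 1 →
    Subsingleton (LocalizedModule P.primeCompl M)

/-!
Let `R` be a noetherian integrally closed domain with fraction field `K`, and let `Q` be the kernel
of a surjection `P → M` with `P` projective and `M` torsion, so that `Ext¹(M, R)` is the cokernel of
the restriction `Hom(P, R) → Hom(Q, R)`. As `K` is injective and `M` is torsion, every `φ : Q → R`
extends uniquely to `Φ : P → K`. If the class of `φ` lies in a pseudo-null submodule, then for every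
prime `𝔭` of height at most one there is `c ∉ 𝔭` such that `c • Φ` takes values in `R`. Since `R` is
the intersection of its localizations at these primes, `Φ` takes values in `R`, and the class of `φ`
vanishes.

That `R⟦X⟧` is integrally closed when `R` is so and noetherian comes from `K⟦X⟧`: an element of its
fraction field which is almost integral over `R⟦X⟧` lies in the discrete valuation ring `K⟦X⟧`, and
removing the coefficients one at a time shows that each of them is almost integral over `R`.
-/

section AlmostIntegral

open scoped nonZeroDivisors

variable {R S T : Type*} [CommRing R] [CommRing S] [CommRing T] [Algebra R S] [Algebra R T]

theorem isAlmostIntegral_algHom_iff {f : S →ₐ[R] T} (hf : Function.Injective f) {s : S} :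
    IsAlmostIntegral R (f s) ↔ IsAlmostIntegral R s := by
  have mem_range_iff (t : S) : f t ∈ (algebraMap R T).range ↔ t ∈ (algebraMap R S).range := by
    simp only [RingHom.mem_range, ← f.commutes, hf.eq_iff]
  simp only [IsAlmostIntegral, ← map_pow, ← map_smul, mem_range_iff]

theorem isAlmostIntegral_tower_top [Algebra S T] [IsScalarTower R S T] {t : T}
    (ht : IsAlmostIntegral R t) (hRS : R⁰ ≤ S⁰.comap (algebraMap R S)) :
    IsAlmostIntegral S t := by
  obtain ⟨r, hr, hrt⟩ := ht
  refine ⟨algebraMap R S r, hRS hr, fun n ↦ ?_⟩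
  obtain ⟨a, ha⟩ := hrt n
  exact ⟨algebraMap R S a, by rw [← IsScalarTower.algebraMap_apply, ha, algebraMap_smul]⟩

end AlmostIntegral

section PowerSeries

open PowerSeries

variable {R S : Type*} [CommRing R] [CommRing S] [Algebra R S]

theorem mem_range_algebraMap_powerSeries_iff {f : S⟦X⟧} :
    f ∈ (algebraMap R⟦X⟧ S⟦X⟧).range ↔ ∀ i, coeff i f ∈ (algebraMap R S).range := by
  constructor
  · rintro ⟨g, rfl⟩ i
    exact ⟨coeff i g, (coeff_map _ _ _).symm⟩
  · intro hf
    choose c hc using hf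
    exact ⟨mk c, by ext i; rw [algebraMap_apply'', coeff_map, coeff_mk, hc]⟩

theorem mem_range_algebraMap_of_X_pow_mul {f : S⟦X⟧} {k : ℕ}
    (hf : X ^ k * f ∈ (algebraMap R⟦X⟧ S⟦X⟧).range) : f ∈ (algebraMap R⟦X⟧ S⟦X⟧).range := by
  rw [mem_range_algebraMap_powerSeries_iff] at hf ⊢
  exact fun i ↦ coeff_X_pow_mul f k i ▸ hf (i + k)

theorem isAlmostIntegral_of_X_mul {f : S⟦X⟧} (hf : IsAlmostIntegral R⟦X⟧ (X * f)) :
    IsAlmostIntegral R⟦X⟧ f := by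
  obtain ⟨r, hr, hrf⟩ := hf
  refine ⟨r, hr, fun n ↦ mem_range_algebraMap_of_X_pow_mul (k := n) ?_⟩
  rw [mul_smul_comm, ← mul_pow]
  exact hrf n

theorem isAlmostIntegral_C {s : S} (hs : IsAlmostIntegral R s) :
    IsAlmostIntegral R⟦X⟧ (C s) := by
  obtain ⟨r, hr, hrs⟩ := hs
  refine ⟨C r, ?_, fun n ↦ ?_⟩
  · exact MvPowerSeries.mem_nonZeroDivisors_of_constantCoeff ((constantCoeff_C r).symm ▸ hr)
  · obtain ⟨a, ha⟩ := hrs n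
    exact ⟨C a, by simp [Algebra.smul_def, algebraMap_apply'', ha]⟩

theorem isAlmostIntegral_constantCoeff [IsDomain R] {f : S⟦X⟧} (hf : IsAlmostIntegral R⟦X⟧ f) :
    IsAlmostIntegral R (constantCoeff f) := by
  obtain ⟨r, hr, hrf⟩ := hf
  have hr₀ : r ≠ 0 := nonZeroDivisors.ne_zero hr
  -- Cancelling the largest power of `X` dividing `r` gives a denominator whose constant
  -- coefficient is nonzero.
  refine ⟨constantCoeff r.divXPowOrder, ?_, fun n ↦ ?_⟩
  · exact mem_nonZeroDivisors_of_ne_zero (mt constantCoeff_divXPowOrder_eq_zero_iff.mp hr₀)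
  have hmem : r.divXPowOrder • f ^ n ∈ (algebraMap R⟦X⟧ S⟦X⟧).range := by
    refine mem_range_algebraMap_of_X_pow_mul (k := r.order.toNat) ?_
    convert hrf n using 1
    conv_rhs => rw [← X_pow_order_mul_divXPowOrder (f := r)]
    simp only [Algebra.smul_def, map_mul, map_pow, algebraMap_apply'', map_X, mul_assoc]
  have hcoeff : constantCoeff (algebraMap R⟦X⟧ S⟦X⟧ r.divXPowOrder) =
      algebraMap R S (constantCoeff r.divXPowOrder) := by
    simp only [algebraMap_apply'', ← coeff_zero_eq_constantCoeff_apply, coeff_map]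
  simpa [Algebra.smul_def, hcoeff] using mem_range_algebraMap_powerSeries_iff.mp hmem 0

theorem isAlmostIntegral_coeff [IsDomain R] {f : S⟦X⟧} (hf : IsAlmostIntegral R⟦X⟧ f) (i : ℕ) :
    IsAlmostIntegral R (coeff i f) := by
  induction i generalizing f with
  | zero => simpa using isAlmostIntegral_constantCoeff hf
  | succ i ih =>
    have hC : IsAlmostIntegral R⟦X⟧ (C (constantCoeff f)) :=
      isAlmostIntegral_C (isAlmostIntegral_constantCoeff hf)
    have hsub : IsAlmostIntegral R⟦X⟧ (f - C (constantCoeff f)) :=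
      Subalgebra.sub_mem (completeIntegralClosure R⟦X⟧ S⟦X⟧) hf hC
    rw [sub_const_eq_X_mul_shift] at hsub
    simpa using ih (isAlmostIntegral_of_X_mul hsub)

theorem completeIntegralClosure_powerSeries_eq_bot [IsDomain R] {K L : Type*} [Field K] [Field L]
    [Algebra R K] [IsFractionRing R K] [Algebra R⟦X⟧ L] [IsFractionRing R⟦X⟧ L]
    (hR : completeIntegralClosure R K = ⊥) : completeIntegralClosure R⟦X⟧ L = ⊥ := by
  have hinj : Function.Injective (algebraMap R⟦X⟧ K⟦X⟧) :=
    map_injective _ (IsFractionRing.injective R K)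
  have : FaithfulSMul R⟦X⟧ K⟦X⟧ := (faithfulSMul_iff_algebraMap_injective _ _).mpr hinj
  let F := FractionRing K⟦X⟧
  let toF : K⟦X⟧ →ₐ[R⟦X⟧] F := IsScalarTower.toAlgHom _ _ _
  have toF_inj : Function.Injective toF := IsFractionRing.injective K⟦X⟧ F
  let ι : L →ₐ[R⟦X⟧] F :=
    IsFractionRing.liftAlgHom (g := toF.comp (Algebra.ofId _ _)) (toF_inj.comp hinj)
  refine eq_bot_iff.mpr fun s hs ↦ ?_
  have hιs : IsAlmostIntegral R⟦X⟧ (ι s) := (isAlmostIntegral_algHom_iff ι.injective).mpr hs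
  have hιs_int : IsIntegral K⟦X⟧ (ι s) :=
    (isAlmostIntegral_tower_top hιs fun r hr ↦ by simpa using hr).isIntegral
  obtain ⟨f, hf : toF f = ι s⟩ := IsIntegrallyClosed.isIntegral_iff.mp hιs_int
  have hf_almost : IsAlmostIntegral R⟦X⟧ f :=
    (isAlmostIntegral_algHom_iff toF_inj).mp (hf ▸ hιs)
  obtain ⟨q, rfl⟩ := mem_range_algebraMap_powerSeries_iff.mpr fun i ↦ by
    have hcoeff : coeff i f ∈ completeIntegralClosure R K := isAlmostIntegral_coeff hf_almost i
    rw [hR] at hcoeff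
    exact hcoeff
  exact ⟨q, ι.injective (by simpa using hf)⟩

theorem isIntegrallyClosed_powerSeries [IsDomain R] [IsNoetherianRing R] [IsIntegrallyClosed R] :
    IsIntegrallyClosed R⟦X⟧ := by
  have hR : completeIntegralClosure R (FractionRing R) = ⊥ := by
    rw [completeIntegralClosure_eq_integralClosure, IsIntegrallyClosed.integralClosure_eq_bot]
  rw [← IsIntegrallyClosed.integralClosure_eq_bot_iff (FractionRing R⟦X⟧),
    ← completeIntegralClosure_eq_integralClosure, completeIntegralClosure_powerSeries_eq_bot hR]

end PowerSeries

section MvPowerSeries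

open MvPowerSeries

variable (R : Type*) [CommRing R] [IsDomain R] [IsNoetherianRing R] [IsIntegrallyClosed R]

theorem isIntegrallyClosed_mvPowerSeries_fin (n : ℕ) :
    IsIntegrallyClosed (MvPowerSeries (Fin n) R) := by
  induction n with
  | zero => exact .of_equiv (isEmptyEquiv (Fin 0) R).toRingEquiv.symm
  | succ n _ =>
    have : IsDomain (MvPowerSeries (Fin n) R) := NoZeroDivisors.to_isDomain _
    have := isIntegrallyClosed_powerSeries (R := MvPowerSeries (Fin n) R)
    exact .of_equiv (finSuccEquiv R n).toRingEquiv.symm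

theorem isIntegrallyClosed_mvPowerSeries (σ : Type*) [Finite σ] :
    IsIntegrallyClosed (MvPowerSeries σ R) := by
  have := isIntegrallyClosed_mvPowerSeries_fin R (Nat.card σ)
  exact .of_equiv (renameEquiv R (Finite.equivFin σ)).toRingEquiv.symm

end MvPowerSeries

theorem IsPseudoNull.exists_smul_eq_zero {R N : Type} [CommRing R] [AddCommGroup N] [Module R N]
    (hN : IsPseudoNull R N) (x : N) (P : Ideal R) [hP : P.IsPrime] (hPht : P.height ≤ 1) :
    ∃ c ∉ P, c • x = 0 := by
  have hsub : Subsingleton (LocalizedModule P.primeCompl N) :=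
    hN P hP ((PrimeSpectrum.height_eq_orderHeight ⟨P, hP⟩).symm.trans_le hPht)
  exact LocalizedModule.subsingleton_iff.mp hsub x

section FractionField

theorem mem_colon_quotient_one_iff {R A : Type*} [CommRing R] [CommRing A] [Algebra R A] {x : A}
    {a : R} :
    a ∈ (⊥ : Submodule R (A ⧸ (1 : Submodule R A))).colon {(1 : Submodule R A).mkQ x} ↔
      ∃ b, algebraMap R A b = a • x := by
  rw [Submodule.mem_colon_singleton, Submodule.mem_bot, ← map_smul, Submodule.mkQ_apply,
    Submodule.Quotient.mk_eq_zero, Submodule.mem_one]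

variable {R K : Type*} [CommRing R] [Field K] [Algebra R K] [IsFractionRing R K]

theorem mem_one_of_forall_smul_mem_ideal [IsDomain R] [IsIntegrallyClosed R] {I : Ideal R}
    (hI : I ≠ ⊥) (hfg : I.FG) {k : K} (hk : ∀ a ∈ I, ∃ b ∈ I, algebraMap R K b = a • k) :
    k ∈ (1 : Submodule R K) := by
  let N : Submodule R K := Submodule.map (Algebra.linearMap R K) I
  have hN : N ≠ ⊥ := by
    rw [← Submodule.map_bot (Algebra.linearMap R K)]
    exact (Submodule.map_injective_of_injective (IsFractionRing.injective R K)).ne hI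
  have hkN : ∀ n ∈ N, k • n ∈ N := by
    rintro _ ⟨a, ha, rfl⟩
    obtain ⟨b, hb, hab⟩ := hk a ha
    exact ⟨b, hb, by simp [hab, Algebra.smul_def, mul_comm]⟩
  have hint : IsIntegral R k :=
    isIntegral_of_smul_mem_submodule N hN (Submodule.FG.map _ hfg) k hkN
  exact Submodule.mem_one.mpr (IsIntegrallyClosed.isIntegral_iff.mp hint)

theorem height_le_one_of_smul_eq_algebraMap [IsNoetherianRing R] {P : Ideal R} [hP : P.IsPrime]
    {k : K} (hPk : ∀ b ∈ P, b • k ∈ (1 : Submodule R K)) {a u : R} (ha : a ∈ P) (hu : u ∉ P)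
    (hau : algebraMap R K u = a • k) : P.height ≤ 1 := by
  suffices P ∈ (Ideal.span {a}).minimalPrimes from
    Ideal.height_le_one_of_isPrincipal_of_mem_minimalPrimes _ _ this
  refine ⟨⟨hP, (Ideal.span_singleton_le_iff_mem P).mpr ha⟩, fun Q ⟨hQ, haQ⟩ hQP b hb ↦ ?_⟩
  obtain ⟨c, hc⟩ := Submodule.mem_one.mp (hPk b hb)
  have hbu : b * u = a * c := by
    apply IsFractionRing.injective R K
    simp only [map_mul, hau, hc, Algebra.smul_def]
    ring
  have hbuQ : b * u ∈ Q :=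
    hbu ▸ Q.mul_mem_right c ((Ideal.span_singleton_le_iff_mem Q).mp haQ)
  exact (hQ.mem_or_mem hbuQ).resolve_right fun huQ ↦ hu (hQP huQ)

-- If `P = (R : k) ≠ 0` and `P • k ⊆ P`, then `k` is integral over `R` by the determinant trick.
-- Otherwise `a • k` lies outside `P` for some `a ∈ P`, and then `P` is minimal over `(a)`.
theorem height_le_one_of_isAssociatedPrime_quotient_one [IsDomain R] [IsNoetherianRing R]
    [IsIntegrallyClosed R] {P : Ideal R} (hP : IsAssociatedPrime P (K ⧸ (1 : Submodule R K))) :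
    P.height ≤ 1 := by
  obtain ⟨hPprime, x, hPx⟩ := isAssociatedPrime_iff.mp hP
  obtain ⟨k, rfl⟩ := (1 : Submodule R K).mkQ_surjective x
  have mem_P_iff (a : R) : a ∈ P ↔ ∃ b, algebraMap R K b = a • k :=
    hPx ▸ mem_colon_quotient_one_iff
  rcases eq_or_ne P ⊥ with rfl | hP0
  · simp
  have hk : k ∉ (1 : Submodule R K) := fun hk ↦
    hPprime.one_notMem ((mem_P_iff 1).mpr (by simpa using hk))
  obtain ⟨a, ha, hau⟩ : ∃ a ∈ P, ∀ b ∈ P, algebraMap R K b ≠ a • k := by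
    by_contra! hPk
    exact hk (mem_one_of_forall_smul_mem_ideal hP0 P.fg_of_isNoetherianRing hPk)
  obtain ⟨u, hu⟩ := (mem_P_iff a).mp ha
  exact height_le_one_of_smul_eq_algebraMap
    (fun b hb ↦ Submodule.mem_one.mpr ((mem_P_iff b).mp hb)) ha (fun huP ↦ hau u huP hu) hu

theorem mem_one_of_forall_height_le_one [IsDomain R] [IsNoetherianRing R] [IsIntegrallyClosed R]
    {k : K}
    (hk : ∀ P : Ideal R, P.IsPrime → P.height ≤ 1 → ∃ c ∉ P, c • k ∈ (1 : Submodule R K)) :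
    k ∈ (1 : Submodule R K) := by
  by_contra hk1
  have hne : (1 : Submodule R K).mkQ k ≠ 0 := by
    rwa [Ne, Submodule.mkQ_apply, Submodule.Quotient.mk_eq_zero]
  obtain ⟨P, hP, hle⟩ := exists_le_isAssociatedPrime_of_isNoetherianRing R _ hne
  obtain ⟨c, hcP, hck⟩ :=
    hk P hP.isPrime (height_le_one_of_isAssociatedPrime_quotient_one hP)
  exact hcP (hle (mem_colon_quotient_one_iff.mpr (Submodule.mem_one.mp hck)))

variable (R K) in
theorem baer_of_isFractionRing : Module.Baer R K := by
  intro I g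
  rcases eq_or_ne I ⊥ with rfl | hI
  · refine ⟨0, fun x hx ↦ ?_⟩
    obtain rfl : x = 0 := hx
    exact (map_zero g).symm
  obtain ⟨a, ha, ha0⟩ := Submodule.exists_mem_ne_zero_of_ne_bot hI
  refine ⟨LinearMap.toSpanSingleton R K (g ⟨a, ha⟩ / algebraMap R K a), fun x hx ↦ ?_⟩
  have ha0' : algebraMap R K a ≠ 0 := by simpa using ha0
  have hswap : a • g ⟨x, hx⟩ = x • g ⟨a, ha⟩ := by
    simp only [← map_smul, SetLike.mk_smul_mk, smul_eq_mul, mul_comm]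
  rw [Algebra.smul_def, Algebra.smul_def] at hswap
  rw [LinearMap.toSpanSingleton_apply, Algebra.smul_def, ← mul_div_assoc, ← hswap,
    mul_div_cancel_left₀ _ ha0']

end FractionField

section Extension

variable {R P : Type*} [CommRing R] [AddCommGroup P] [Module R P] {Q : Submodule R P}

theorem eq_of_comp_subtype_eq_of_isTorsion_quotient {N : Type*} [AddCommGroup N] [Module R N]
    [Module.IsTorsionFree R N] (hQ : Module.IsTorsion R (P ⧸ Q)) {f g : P →ₗ[R] N}
    (hfg : f ∘ₗ Q.subtype = g ∘ₗ Q.subtype) : f = g := by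
  ext y
  obtain ⟨a, ha⟩ := @hQ (Q.mkQ y)
  have hay : (a : R) • y ∈ Q := (Submodule.Quotient.mk_eq_zero Q).mp ha
  have hafg : (a : R) • f y = (a : R) • g y := by
    simpa only [LinearMap.comp_apply, Submodule.subtype_apply, map_smul] using
      LinearMap.congr_fun hfg ⟨_, hay⟩
  exact (isRegular_iff_mem_nonZeroDivisors.mpr a.2).smul_right_injective N hafg

theorem exists_extension_of_forall_height_le_one [IsDomain R] [IsNoetherianRing R]
    [IsIntegrallyClosed R] (hQ : Module.IsTorsion R (P ⧸ Q)) (φ : Q →ₗ[R] R)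
    (hφ : ∀ 𝔭 : Ideal R, 𝔭.IsPrime → 𝔭.height ≤ 1 →
      ∃ c ∉ 𝔭, ∃ ψ : P →ₗ[R] R, ψ ∘ₗ Q.subtype = c • φ) :
    ∃ ψ : P →ₗ[R] R, ψ ∘ₗ Q.subtype = φ := by
  let K := FractionRing R
  let ι : R →ₗ[R] K := Algebra.linearMap R K
  have hι : Function.Injective ι := IsFractionRing.injective R K
  obtain ⟨Φ, hΦ⟩ :=
    (baer_of_isFractionRing R K).extension_property Q.subtype Q.subtype_injective (ι ∘ₗ φ)
  have hΦ_mem (y : P) : Φ y ∈ LinearMap.range ι := by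
    rw [← Submodule.one_eq_range]
    refine mem_one_of_forall_height_le_one fun 𝔭 hprime hht ↦ ?_
    obtain ⟨c, hc, ψ, hψ⟩ := hφ 𝔭 hprime hht
    have hcΦ : c • Φ = ι ∘ₗ ψ := eq_of_comp_subtype_eq_of_isTorsion_quotient hQ <| by
      rw [LinearMap.smul_comp, hΦ, LinearMap.comp_assoc, hψ, LinearMap.comp_smul]
    exact ⟨c, hc, Submodule.mem_one.mpr ⟨ψ y, (LinearMap.congr_fun hcΦ y).symm⟩⟩
  refine ⟨(LinearEquiv.ofInjective ι hι).symm ∘ₗ Φ.codRestrict _ hΦ_mem, ?_⟩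
  ext y
  apply hι
  simpa using LinearMap.congr_fun hΦ y

end Extension

section ExtOne

variable {R M : Type} [CommRing R] [AddCommGroup M] [Module R M]
  (P : ProjectiveResolution (ModuleCat.of R M))

/-- The first syzygy of `M` in the projective resolution `P`. -/
noncomputable abbrev syzygy : Submodule R (P.complex.X 0) :=
  LinearMap.ker (P.π.f 0).hom

/-- The differential of `P` in degree one, corestricted to the first syzygy. -/
noncomputable def toSyzygy : P.complex.X 1 →ₗ[R] syzygy P :=
  (P.complex.d 1 0).hom.codRestrict _ fun z ↦
    LinearMap.congr_fun (ModuleCat.hom_ext_iff.mp P.complex_d_comp_π_f_zero) z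

theorem toSyzygy_surjective : Function.Surjective (toSyzygy P) := fun ⟨y, hy⟩ ↦ by
  obtain ⟨z, hz⟩ := (ShortComplex.moduleCat_exact_iff _).mp P.exact₀ y hy
  exact ⟨z, Subtype.ext hz⟩

theorem exact_d_toSyzygy : Function.Exact (P.complex.d 2 1).hom (toSyzygy P) := fun z ↦ by
  have hexact :=
    (ShortComplex.ShortExact.moduleCat_exact_iff_function_exact _).mp (P.exact_succ 0) z
  exact Subtype.ext_iff.trans hexact

theorem isTorsion_quotient_syzygy (hM : Module.IsTorsion R M) :
    Module.IsTorsion R (P.complex.X 0 ⧸ syzygy P) := by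
  rintro ⟨y⟩
  obtain ⟨a, ha⟩ := @hM ((P.π.f 0).hom y)
  refine ⟨a, (Submodule.Quotient.mk_eq_zero _).mpr ?_⟩
  exact ((P.π.f 0).hom.map_smul a.1 y).trans ha

variable (L : Type) [AddCommGroup L] [Module R L]

/-- The complex `Hom(P, L)` in degrees `0`, `1` and `2`. -/
noncomputable abbrev homComplex₀₁₂ : ShortComplex (ModuleCat R) :=
  (P.complex.linearYonedaObj R (ModuleCat.of R L)).sc' 0 1 2

/-- `Ext¹(M, L)` as the quotient of the cocycles of `Hom(P, L)` by the coboundaries. -/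
noncomputable def extOneEquiv : extModule R M L 1 ≃ₗ[R]
    LinearMap.ker (homComplex₀₁₂ P L).g.hom ⧸
      LinearMap.range (homComplex₀₁₂ P L).moduleCatToCycles :=
  (P.isoExt 1 (ModuleCat.of R L) ≪≫
    ShortComplex.homologyMapIso ((P.complex.linearYonedaObj R (ModuleCat.of R L)).isoSc' 0 1 2
      (by simp) (by simp)) ≪≫ (homComplex₀₁₂ P L).moduleCatHomologyIso).toLinearEquiv

/-- The cocycle of `Hom(P, L)` obtained from a linear map on the first syzygy. -/
noncomputable def cocycleOfSyzygy :
    (syzygy P →ₗ[R] L) →ₗ[R] LinearMap.ker (homComplex₀₁₂ P L).g.hom :=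
  LinearMap.codRestrict _
    ((ModuleCat.homLinearEquiv (S := R)).symm.toLinearMap ∘ₗ LinearMap.lcomp R L (toSyzygy P))
    fun φ ↦ by
      have hcomp : φ ∘ₗ toSyzygy P ∘ₗ (P.complex.d 2 1).hom = 0 := by
        rw [(exact_d_toSyzygy P).linearMap_comp_eq_zero, LinearMap.comp_zero]
      exact ModuleCat.hom_ext hcomp

/-- The connecting map of `0 → syzygy P → P₀ → M → 0`. -/
noncomputable def extOneOfSyzygy : (syzygy P →ₗ[R] L) →ₗ[R] extModule R M L 1 :=
  (extOneEquiv P L).symm.toLinearMap ∘ₗ Submodule.mkQ _ ∘ₗ cocycleOfSyzygy P L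

variable {P L}

theorem cocycleOfSyzygy_injective : Function.Injective (cocycleOfSyzygy P L) := fun _ _ h ↦
  (LinearMap.cancel_right (toSyzygy_surjective P)).mp
    (congrArg (fun χ ↦ ModuleCat.Hom.hom (χ.1 : P.complex.X 1 ⟶ ModuleCat.of R L)) h)

theorem cocycleOfSyzygy_surjective : Function.Surjective (cocycleOfSyzygy P L) := fun χ ↦ by
  have hχ : ModuleCat.Hom.hom (χ.1 : P.complex.X 1 ⟶ ModuleCat.of R L) ∘ₗ
      (P.complex.d 2 1).hom = 0 := congrArg ModuleCat.Hom.hom χ.2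
  obtain ⟨φ, hφ⟩ := (LinearMap.exact_lcomp_of_exact_of_surjective L (exact_d_toSyzygy P)
    (toSyzygy_surjective P) _).mp hχ
  exact ⟨φ, Subtype.ext (ModuleCat.hom_ext hφ)⟩

theorem extOneOfSyzygy_surjective : Function.Surjective (extOneOfSyzygy P L) :=
  (extOneEquiv P L).symm.surjective.comp
    ((Submodule.mkQ_surjective _).comp cocycleOfSyzygy_surjective)

theorem extOneOfSyzygy_eq_zero_iff {φ : syzygy P →ₗ[R] L} :
    extOneOfSyzygy P L φ = 0 ↔
      ∃ ψ : P.complex.X 0 →ₗ[R] L, ψ ∘ₗ (syzygy P).subtype = φ := by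
  have hcomp (ψ : P.complex.X 0 →ₗ[R] L) :
      (homComplex₀₁₂ P L).moduleCatToCycles (ModuleCat.ofHom ψ) =
        cocycleOfSyzygy P L (ψ ∘ₗ (syzygy P).subtype) := rfl
  rw [extOneOfSyzygy, LinearMap.comp_apply, LinearEquiv.coe_coe, LinearEquiv.map_eq_zero_iff,
    LinearMap.comp_apply, Submodule.mkQ_apply, Submodule.Quotient.mk_eq_zero]
  constructor
  · rintro ⟨ψ, hψ⟩
    exact ⟨ModuleCat.Hom.hom ψ, cocycleOfSyzygy_injective hψ⟩
  · rintro ⟨ψ, rfl⟩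
    exact ⟨ModuleCat.ofHom ψ, hcomp ψ⟩

end ExtOne

theorem stmt_4_general {R M : Type} [CommRing R] [IsDomain R] [IsNoetherianRing R]
    [IsIntegrallyClosed R] [AddCommGroup M] [Module R M] (htors : Module.IsTorsion R M)
    (N : Submodule R (extModule R M R 1)) (hN : IsPseudoNull R N) : N = ⊥ := by
  let P := projectiveResolution (ModuleCat.of R M)
  have htors' : Module.IsTorsion R (P.complex.X 0 ⧸ syzygy P) := isTorsion_quotient_syzygy P htors
  rw [Submodule.eq_bot_iff]
  intro x hx
  obtain ⟨φ, rfl⟩ := extOneOfSyzygy_surjective (P := P) x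
  rw [extOneOfSyzygy_eq_zero_iff]
  refine exists_extension_of_forall_height_le_one htors' φ fun 𝔭 h𝔭 hht ↦ ?_
  obtain ⟨c, hc, hcx⟩ := hN.exists_smul_eq_zero ⟨_, hx⟩ 𝔭 hht
  refine ⟨c, hc, extOneOfSyzygy_eq_zero_iff.mp ?_⟩
  rw [map_smul]
  exact congrArg Subtype.val hcx

/-- For Λ = ℤ_p[[T₁,…,T_d]] and M a finitely generated torsion Λ-module,
Ext^1_Λ(M,Λ) has no nonzero pseudo-null Λ-submodule. -/
theorem stmt_4 (p : ℕ) [Fact p.Prime] (d : ℕ) (hd : 1 ≤ d)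
    (M : Type) [AddCommGroup M] [Module (MvPowerSeries (Fin d) ℤ_[p]) M]
    [Module.Finite (MvPowerSeries (Fin d) ℤ_[p]) M]
    (htors : Module.IsTorsion (MvPowerSeries (Fin d) ℤ_[p]) M) :
    ∀ N : Submodule (MvPowerSeries (Fin d) ℤ_[p])
      (extModule (MvPowerSeries (Fin d) ℤ_[p]) M (MvPowerSeries (Fin d) ℤ_[p]) 1),
      IsPseudoNull (MvPowerSeries (Fin d) ℤ_[p]) N → N = ⊥ := by
  intro N hN
  have : IsDomain (MvPowerSeries (Fin d) ℤ_[p]) := NoZeroDivisors.to_isDomain _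
  have := isIntegrallyClosed_mvPowerSeries ℤ_[p] (Fin d)
  exact stmt_4_general htors N hN
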